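/- arXiv:2510.16839 — 3 statements merged into one kernel-verified Lean document; each statement's English description precedes it below -/
import Mathlib

section
/- Let Γ be a digraphon on a probability space (Ω,μ). Then there exists a finite or countable index set I not containing 0 and a measurable partition Ω = X₀ ⊔ ⨆_{i∈I} X_i such that X₀ is either a null/empty set or is fragmented in Γ, and each X_i (i ∈ I) is a strong component in Γ. -/
open MeasureTheory Filter Set Topology
open scoped ENNReal Real

namespace Digraphon

variable {Ω : Type*} [MeasurableSpace Ω]

/-- `kpowAux μ Γ n` is the `(n+1)`-st kernel power of `Γ`. -/
noncomputable def kpowAux (μ : Measure Ω) (Γ : Ω → Ω → ℝ) : ℕ → Ω → Ω → ℝ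
  | 0 => Γ
  | n + 1 => fun x y => ∫ z, Γ x z * kpowAux μ Γ n z y ∂μ

/-- `dpow μ Γ k` is the `k`-th kernel power of `Γ` (intended for `k ≥ 1`). -/
noncomputable def dpow (μ : Measure Ω) (Γ : Ω → Ω → ℝ) (k : ℕ) : Ω → Ω → ℝ :=
  kpowAux μ Γ (k - 1)

noncomputable def kpowAuxC (μ : Measure Ω) (Γ : Ω → Ω → ℂ) : ℕ → Ω → Ω → ℂ
  | 0 => Γ
  | n + 1 => fun x y => ∫ z, Γ x z * kpowAuxC μ Γ n z y ∂μ

noncomputable def dpowC (μ : Measure Ω) (Γ : Ω → Ω → ℂ) (k : ℕ) : Ω → Ω → ℂ :=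
  kpowAuxC μ Γ (k - 1)

/-- The set of points reachable from `x`. -/
def ReachOut (μ : Measure Ω) (Γ : Ω → Ω → ℝ) (x : Ω) : Set Ω :=
  {z | ∃ k : ℕ, 1 ≤ k ∧ 0 < dpow μ Γ k x z}

/-- The reachability sequence from `x` to `y`. -/
def reachSeq (μ : Measure Ω) (Γ : Ω → Ω → ℝ) (x y : Ω) : Set ℕ :=
  {k : ℕ | 1 ≤ k ∧ 0 < dpow μ Γ k x y}

/-- A digraphon: a measurable kernel with values in `[0,1]`. -/
def IsDigraphon (Γ : Ω → Ω → ℝ) : Prop :=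
  Measurable (Function.uncurry Γ) ∧ ∀ x y, Γ x y ∈ Set.Icc (0 : ℝ) 1

/-- `X` is strongly connected in `Γ`. -/
def StronglyConnectedIn (μ : Measure Ω) (Γ : Ω → Ω → ℝ) (X : Set Ω) : Prop :=
  MeasurableSet X ∧ 0 < μ X ∧
    ∀ A B : Set Ω, MeasurableSet A → MeasurableSet B → A ∪ B = X → Disjoint A B →
      0 < μ A → 0 < μ B → 0 < ∫ x in A, ∫ y in B, Γ x y ∂μ ∂μ

/-- `X` is a strong component in `Γ`. -/
def StrongComponent (μ : Measure Ω) (Γ : Ω → Ω → ℝ) (X : Set Ω) : Prop :=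
  StronglyConnectedIn μ Γ X ∧
    ∀ Y : Set Ω, MeasurableSet Y → 0 < μ (X ∩ Y) → 0 < μ (Y \ X) →
      ¬ StronglyConnectedIn μ Γ Y

/-- `X` is fragmented in `Γ`. -/
def Fragmented (μ : Measure Ω) (Γ : Ω → Ω → ℝ) (X : Set Ω) : Prop :=
  ∀ Y : Set Ω, Y ⊆ X → MeasurableSet Y → ¬ StronglyConnectedIn μ Γ Y

/-- `τ` is an eigenvalue of the integral kernel operator of `Γ` on `L²(Ω;ℂ)`. -/
def IsEigenvalue (μ : Measure Ω) (Γ : Ω → Ω → ℝ) (τ : ℂ) : Prop :=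
  ∃ f : Ω → ℂ, MemLp f 2 μ ∧ ¬(f =ᵐ[μ] 0) ∧
    ∀ᵐ x ∂μ, ∫ y, f y * (Γ y x : ℂ) ∂μ = τ * f x

/-- The spectral radius of `Γ` (`0` if there are no eigenvalues). -/
noncomputable def specRad (μ : Measure Ω) (Γ : Ω → Ω → ℝ) : ℝ :=
  sSup (insert 0 {r : ℝ | ∃ τ : ℂ, IsEigenvalue μ Γ τ ∧ ‖τ‖ = r})

/-- The number of eigenvalues of modulus `specRad μ Γ`. -/
noncomputable def periphMult (μ : Measure Ω) (Γ : Ω → Ω → ℝ) : ℕ :=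
  {τ : ℂ | IsEigenvalue μ Γ τ ∧ ‖τ‖ = specRad μ Γ}.ncard

/-- `P : ZMod d → Set Ω` witnesses graphical `d`-periodicity of `Γ`. -/
def IsPeriodicityWitness (μ : Measure Ω) (Γ : Ω → Ω → ℝ) {d : ℕ} (P : ZMod d → Set Ω) : Prop :=
  (∀ j, MeasurableSet (P j)) ∧ Pairwise (Function.onFun Disjoint P) ∧ (⋃ j, P j) = Set.univ ∧
    ∀ j : ZMod d, (μ.prod μ) {p : Ω × Ω | p.1 ∈ P j ∧ p.2 ∉ P (j + 1) ∧ Γ p.1 p.2 ≠ 0} = 0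

/-- `Γ` is graphically `d`-periodic. -/
def GraphPeriodic (μ : Measure Ω) (Γ : Ω → Ω → ℝ) (d : ℕ) : Prop :=
  ∃ P : ZMod d → Set Ω, IsPeriodicityWitness μ Γ P

/-- `Γ` is aperiodic. -/
def Aperiodic (μ : Measure Ω) (Γ : Ω → Ω → ℝ) : Prop :=
  ∀ d : ℕ, 1 ≤ d → GraphPeriodic μ Γ d → d = 1

/-- `S ⊆ ℕ` is eventually `D`-periodic with shift `s`. -/
def EvPeriodic (D : ℕ) (s : ℤ) (S : Set ℕ) : Prop :=
  (∀ n ∈ S, (D : ℤ) ∣ ((n : ℤ) - s)) ∧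
    ∃ k : ℕ, ∀ n : ℕ, k ≤ n → (((D : ℤ) ∣ ((n : ℤ) - s)) ↔ n ∈ S)

/-- The homomorphism density `t(C_k, Γ)` of the directed `k`-cycle. -/
noncomputable def cycleDensity (μ : Measure Ω) (Γ : Ω → Ω → ℝ) (k : ℕ) : ℝ :=
  ∫ x : Fin k → Ω, ∏ i : Fin k, Γ (x i) (x (finRotate k i)) ∂(Measure.pi fun _ => μ)

/-- `Γ⟦A⟧` : the kernel equal to `Γ` on `A × A` and `0` elsewhere. -/
noncomputable def kerRestrict (Γ : Ω → Ω → ℝ) (A : Set Ω) : Ω → Ω → ℝ :=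
  fun x y => (A ×ˢ A).indicator (Function.uncurry Γ) (x, y)

/-- Equality of sets modulo a `μ`-nullset. -/
def AEEqSet (μ : Measure Ω) (A B : Set Ω) : Prop := μ ((A \ B) ∪ (B \ A)) = 0

/-- The normalized restriction of `μ` to `A`, as a measure on `↥A`. -/
noncomputable def subMeasure (μ : Measure Ω) (A : Set Ω) : Measure ↥A :=
  (μ A)⁻¹ • Measure.comap Subtype.val μ

/-- The restriction of a kernel to `A × A`, as a kernel on `↥A`. -/
def subKernel (Γ : Ω → Ω → ℝ) (A : Set Ω) : ↥A → ↥A → ℝ :=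
  fun a b => Γ ↑a ↑b

/-- A finite oriented graph: no pair of antiparallel edges (in particular no loops). -/
structure OrientedGraph where
  n : ℕ
  E : Finset (Fin n × Fin n)
  no_anti : ∀ e ∈ E, (e.2, e.1) ∉ E

/-- The homomorphism density `t(D, Γ)` of an oriented graph `D`. -/
noncomputable def homDensity (μ : Measure Ω) (Γ : Ω → Ω → ℝ) (D : OrientedGraph) : ℝ :=
  ∫ x : Fin D.n → Ω, ∏ e ∈ D.E, Γ (x e.1) (x e.2) ∂(Measure.pi fun _ => μ)

/-- The cut norm distance of two kernels. -/
noncomputable def cutNormDist (μ : Measure Ω) (U W : Ω → Ω → ℝ) : ℝ :=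
  sSup {r : ℝ | ∃ S T : Set Ω, MeasurableSet S ∧ MeasurableSet T ∧
    r = |∫ x in S, ∫ y in T, (U x y - W x y) ∂μ ∂μ|}

/-- The cut distance of two kernels. -/
noncomputable def cutDist (μ : Measure Ω) (U W : Ω → Ω → ℝ) : ℝ :=
  sInf {r : ℝ | ∃ e : Ω ≃ᵐ Ω, MeasurePreserving e μ μ ∧
    r = cutNormDist μ U (fun x y => W (e x) (e y))}


lemma q_mono (μ : Measure Ω) [IsProbabilityMeasure μ] {Γ : Ω → Ω → ℝ} (hΓ : IsDigraphon Γ)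
    {A A' B B' : Set Ω} (hA : A' ⊆ A) (hB : B' ⊆ B) :
    ∫ x in A', ∫ y in B', Γ x y ∂μ ∂μ ≤ ∫ x in A, ∫ y in B, Γ x y ∂μ ∂μ := by
  have hΓi : ∀ x, Integrable (Γ x) μ := fun x => by
    refine Integrable.of_bound
      (hΓ.1.comp measurable_prodMk_left).aestronglyMeasurable 1 (ae_of_all _ fun y => ?_)
    have h := hΓ.2 x y
    simp only [Function.comp, Function.uncurry, Real.norm_eq_abs, abs_of_nonneg h.1]
    exact h.2
  have h0 : ∀ (C : Set Ω) x, 0 ≤ ∫ y in C, Γ x y ∂μ := fun C x =>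
    integral_nonneg fun y => (hΓ.2 x y).1
  have hint : ∀ C : Set Ω, Integrable (fun x => ∫ y in C, Γ x y ∂μ) μ := fun C => by
    refine Integrable.of_bound (C := 1) ?_ (ae_of_all _ fun x => ?_)
    · exact (StronglyMeasurable.integral_prod_right (ν := μ.restrict C)
        hΓ.1.stronglyMeasurable).aestronglyMeasurable
    · rw [Real.norm_eq_abs, abs_of_nonneg (h0 C x)]
      calc ∫ y in C, Γ x y ∂μ ≤ ∫ y, Γ x y ∂μ :=
            setIntegral_le_integral (hΓi x) (ae_of_all _ fun y => (hΓ.2 x y).1)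
        _ ≤ ∫ y, (1 : ℝ) ∂μ :=
            integral_mono (hΓi x) (integrable_const _) fun y => (hΓ.2 x y).2
        _ = 1 := by simp
  calc ∫ x in A', ∫ y in B', Γ x y ∂μ ∂μ ≤ ∫ x in A', ∫ y in B, Γ x y ∂μ ∂μ := by
        refine integral_mono (hint B').integrableOn (hint B).integrableOn fun x => ?_
        exact setIntegral_mono_set (hΓi x).integrableOn
          (ae_of_all _ fun y => (hΓ.2 x y).1) (HasSubset.Subset.eventuallyLE hB)
    _ ≤ _ := setIntegral_mono_set (hint B).integrableOn
          (ae_of_all _ fun x => h0 B x) (HasSubset.Subset.eventuallyLE hA)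

lemma sc_iUnion (μ : Measure Ω) [IsProbabilityMeasure μ] {Γ : Ω → Ω → ℝ} (hΓ : IsDigraphon Γ)
    {S : Set Ω} (hS : 0 < μ S) {ι : Type*} [Countable ι] [Nonempty ι] (Y : ι → Set Ω)
    (hY : ∀ i, StronglyConnectedIn μ Γ (Y i)) (hSY : ∀ i, S ⊆ Y i) :
    StronglyConnectedIn μ Γ (⋃ i, Y i) := by
  have hSU : S ⊆ ⋃ i, Y i := fun x hx => mem_iUnion.2 ⟨Classical.arbitrary ι, hSY _ hx⟩
  refine ⟨MeasurableSet.iUnion fun i => (hY i).1, hS.trans_le (measure_mono hSU), ?_⟩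
  intro A B hA hB hAB hd hA0 hB0
  by_contra hq
  have key : ∀ i, μ (A ∩ Y i) = 0 ∨ μ (B ∩ Y i) = 0 := by
    intro i
    by_contra! h
    refine hq (lt_of_lt_of_le ((hY i).2.2 (A ∩ Y i) (B ∩ Y i) (hA.inter (hY i).1)
      (hB.inter (hY i).1) ?_ ?_ (pos_iff_ne_zero.2 h.1) (pos_iff_ne_zero.2 h.2))
      (q_mono μ hΓ inter_subset_left inter_subset_left))
    · rw [← union_inter_distrib_right, hAB]
      exact inter_eq_right.2 (subset_iUnion Y i)
    · exact hd.mono inter_subset_left inter_subset_left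
  have null : ∀ C : Set Ω, C ⊆ (⋃ i, Y i) → (∀ i, μ (C ∩ Y i) = 0) → μ C = 0 := by
    intro C hC h
    rw [← inter_eq_left.2 hC, inter_iUnion]
    exact measure_iUnion_null h
  by_cases h : μ (A ∩ S) = 0
  · have hBS : μ (B ∩ S) ≠ 0 := by
      intro h'
      refine hS.ne' (measure_mono_null (t := (A ∩ S) ∪ (B ∩ S)) ?_ (measure_union_null h h'))
      rw [← union_inter_distrib_right, hAB]
      exact subset_inter hSU subset_rfl
    refine hA0.ne' (null A (hAB ▸ subset_union_left) fun i => (key i).resolve_right fun h' => ?_)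
    exact hBS (measure_mono_null (inter_subset_inter_right _ (hSY i)) h')
  · refine hB0.ne' (null B (hAB ▸ subset_union_right) fun i => (key i).resolve_left fun h' => ?_)
    exact h (measure_mono_null (inter_subset_inter_right _ (hSY i)) h')

lemma sc_union (μ : Measure Ω) [IsProbabilityMeasure μ] {Γ : Ω → Ω → ℝ} (hΓ : IsDigraphon Γ)
    {X Y : Set Ω} (hX : StronglyConnectedIn μ Γ X) (hY : StronglyConnectedIn μ Γ Y)
    (h : 0 < μ (X ∩ Y)) : StronglyConnectedIn μ Γ (X ∪ Y) := by
  rw [union_eq_iUnion]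
  refine sc_iUnion μ hΓ h _ ?_ ?_
  · rintro (_ | _) <;> assumption
  · rintro (_ | _)
    · exact inter_subset_right
    · exact inter_subset_left

lemma exists_component (μ : Measure Ω) [IsProbabilityMeasure μ] {Γ : Ω → Ω → ℝ}
    (hΓ : IsDigraphon Γ) {S : Set Ω} (hS : StronglyConnectedIn μ Γ S) :
    ∃ X, S ⊆ X ∧ StrongComponent μ Γ X := by
  set F : Set (Set Ω) := {Y | StronglyConnectedIn μ Γ Y ∧ S ⊆ Y} with hF
  have hne : (μ '' F).Nonempty := ⟨_, S, ⟨hS, subset_rfl⟩, rfl⟩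
  obtain ⟨u, -, hu, huF⟩ := exists_seq_tendsto_sSup hne (OrderTop.bddAbove _)
  choose Y hYF hYu using huF
  have hX : StronglyConnectedIn μ Γ (⋃ n, Y n) :=
    sc_iUnion μ hΓ hS.2.1 Y (fun n => (hYF n).1) (fun n => (hYF n).2)
  have hSX : S ⊆ ⋃ n, Y n := fun x hx => mem_iUnion.2 ⟨0, (hYF 0).2 hx⟩
  refine ⟨_, hSX, hX, ?_⟩
  intro Z hZ h1 h2 hZc
  have hU := sc_union μ hΓ hX hZc h1
  have hle : μ ((⋃ n, Y n) ∪ Z) ≤ μ (⋃ n, Y n) := by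
    have hmem : μ ((⋃ n, Y n) ∪ Z) ∈ μ '' F :=
      ⟨_, ⟨hU, hSX.trans subset_union_left⟩, rfl⟩
    refine (le_sSup hmem).trans ?_
    refine le_of_tendsto' hu fun n => ?_
    rw [← hYu n]
    exact measure_mono (subset_iUnion Y n)
  rw [← union_diff_self, measure_union disjoint_sdiff_right (hZ.diff hX.1)] at hle
  exact absurd hle (not_le.2 (ENNReal.lt_add_right (measure_ne_top _ _) h2.ne'))

lemma component_diff_null (μ : Measure Ω) {Γ : Ω → Ω → ℝ} {X N : Set Ω} (hN : MeasurableSet N)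
    (h0 : μ (X ∩ N) = 0) (hX : StrongComponent μ Γ X) : StrongComponent μ Γ (X \ N) := by
  have hm : MeasurableSet (X ∩ N) := hX.1.1.inter hN
  refine ⟨⟨hX.1.1.diff hN, ?_, ?_⟩, ?_⟩
  · rw [← diff_self_inter, measure_diff_null h0]
    exact hX.1.2.1
  · intro A B hA hB hAB hd hA0 hB0
    have h := hX.1.2.2 (A ∪ (X ∩ N)) B (hA.union hm) hB ?_ ?_
      (hA0.trans_le (measure_mono subset_union_left)) hB0
    · rwa [setIntegral_congr_set (union_ae_eq_left_of_ae_eq_empty (ae_eq_empty.2 h0))] at h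
    · rw [union_right_comm, hAB, diff_union_inter]
    · refine disjoint_union_left.2 ⟨hd, ?_⟩
      have hBX : B ⊆ X \ N := hAB ▸ subset_union_right
      exact Set.disjoint_left.2 fun x hx hxB => (hBX hxB).2 hx.2
  · intro Y hY h1 h2
    refine hX.2 Y hY (h1.trans_le (measure_mono (inter_subset_inter_left _ diff_subset))) ?_
    rw [pos_iff_ne_zero]
    intro h
    refine h2.ne' (measure_mono_null (t := (Y \ X) ∪ (X ∩ N)) ?_ (measure_union_null h h0))
    intro x hx
    by_cases hxX : x ∈ X
    · exact Or.inr ⟨hxX, by_contra fun hxN => hx.2 ⟨hxX, hxN⟩⟩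
    · exact Or.inl ⟨hx.1, hxX⟩

/-- Existence of the decomposition of a digraphon into strong components
and a fragmented (or null) set. -/
theorem decomposition_into_strong_components_exists
    {Ω : Type*} [MeasurableSpace Ω] (μ : Measure Ω) [IsProbabilityMeasure μ]
    (Γ : Ω → Ω → ℝ) (hΓ : IsDigraphon Γ) :
    ∃ (I : Set ℕ) (X : ℕ → Set Ω), 0 ∉ I ∧ I.Countable ∧
      (∀ i ∈ insert 0 I, MeasurableSet (X i)) ∧
      (insert 0 I).PairwiseDisjoint X ∧
      (⋃ i ∈ insert 0 I, X i) = Set.univ ∧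
      (μ (X 0) = 0 ∨ Fragmented μ Γ (X 0)) ∧
      (∀ i ∈ I, StrongComponent μ Γ (X i)) := by
  obtain ⟨F, hF⟩ := zorn_subset
    {F : Set (Set Ω) | (∀ s ∈ F, StrongComponent μ Γ s) ∧ F.PairwiseDisjoint id} (by
      intro c hc hch
      refine ⟨⋃₀ c, ⟨?_, ?_⟩, fun s hs => subset_sUnion_of_mem hs⟩
      · rintro s ⟨t, ht, hst⟩
        exact (hc ht).1 s hst
      · exact (pairwiseDisjoint_sUnion hch.directedOn).2 fun t ht => (hc ht).2)
  have hFc := hF.prop.1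
  have hFd := hF.prop.2
  have hcount : F.Countable := by
    have := Measure.countable_meas_pos_of_disjoint_iUnion (μ := μ) (As := fun s : F => (s : Set Ω))
      (fun s => (hFc s s.2).1.1) (fun s t hst => hFd s.2 t.2 (fun h => hst (Subtype.ext h)))
    have h2 : {s : F | 0 < μ (s : Set Ω)} = univ := eq_univ_of_forall fun s => (hFc s s.2).1.2.1
    rw [h2, countable_univ_iff] at this
    exact this
  have hU : MeasurableSet (⋃₀ F) := MeasurableSet.sUnion hcount fun s hs => (hFc s hs).1.1
  have hfrag : Fragmented μ Γ (⋃₀ F)ᶜ := by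
    intro Y hYX hYm hYc
    obtain ⟨Z, hYZ, hZ⟩ := exists_component μ hΓ hYc
    have h0 : μ (Z ∩ ⋃₀ F) = 0 := by
      rw [inter_comm, sUnion_eq_biUnion, iUnion₂_inter]
      refine (measure_biUnion_null_iff hcount).2 fun s hs => ?_
      by_contra h
      refine (hFc s hs).2 Z hZ.1.1 (pos_iff_ne_zero.2 h) (hYc.2.1.trans_le (measure_mono ?_)) hZ.1
      exact fun x hx => ⟨hYZ hx, fun hxs => hYX hx ⟨s, hs, hxs⟩⟩
    have hZ' := component_diff_null μ hU h0 hZ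
    have hmem : Z \ ⋃₀ F ∈ F := by
      refine hF.le_of_ge (y := insert (Z \ ⋃₀ F) F) ⟨?_, ?_⟩ (subset_insert _ _) (mem_insert _ _)
      · rintro s (rfl | hs)
        · exact hZ'
        · exact hFc s hs
      · refine hFd.insert fun s hs _ => ?_
        exact disjoint_sdiff_left.mono_right (subset_sUnion_of_mem hs)
    have hsub : Z \ ⋃₀ F ⊆ ∅ := fun x hx => hx.2 ⟨_, hmem, hx⟩
    exact hZ'.1.2.1.ne' (measure_mono_null hsub measure_empty)
  have : Countable F := hcount
  obtain ⟨f, hf⟩ := exists_injective_nat F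
  let g : F → ℕ := fun s => f s + 1
  have hg : Function.Injective g := fun s t h => hf (Nat.succ_injective h)
  let X : ℕ → Set Ω := Function.extend g (fun s => (s : Set Ω)) (fun _ => (⋃₀ F)ᶜ)
  have hXg : ∀ s : F, X (g s) = s := fun s => hg.extend_apply _ _ s
  have h0g : (0 : ℕ) ∉ range g := by
    rintro ⟨s, hs⟩
    exact Nat.succ_ne_zero _ hs
  have hX0 : X 0 = (⋃₀ F)ᶜ := Function.extend_apply' _ _ _ h0g
  refine ⟨range g, X, h0g, countable_range g, ?_, ?_, ?_, Or.inr (hX0 ▸ hfrag), ?_⟩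
  · rintro i (rfl | ⟨s, rfl⟩)
    · rw [hX0]; exact hU.compl
    · rw [hXg]; exact (hFc s s.2).1.1
  · refine PairwiseDisjoint.insert ?_ ?_
    · rintro _ ⟨s, rfl⟩ _ ⟨t, rfl⟩ hst
      simp only [Function.onFun, hXg]
      exact hFd s.2 t.2 fun h => hst (congrArg g (Subtype.ext h))
    · rintro _ ⟨s, rfl⟩ _
      rw [hX0, hXg]
      exact disjoint_compl_left.mono_right (subset_sUnion_of_mem s.2)
  · refine eq_univ_of_forall fun x => ?_
    rw [mem_iUnion₂]
    by_cases hx : x ∈ ⋃₀ F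
    · obtain ⟨s, hs, hxs⟩ := hx
      exact ⟨g ⟨s, hs⟩, Or.inr ⟨_, rfl⟩, by rw [hXg]; exact hxs⟩
    · exact ⟨0, Or.inl rfl, by rw [hX0]; exact hx⟩
  · rintro _ ⟨s, rfl⟩
    rw [hXg]; exact hFc s s.2

end Digraphon
end

section
/- Let Γ be a digraphon on a probability space (Ω,μ). If {X_i}_{i∈I∪{0}} and {X'_i}_{i∈I'∪{0}} are two measurable partitions of Ω such that in each, the part indexed by 0 is fragmented in Γ (or null) and every other part is a strong component in Γ, then there exists a bijection π : I → I' such that X'_{π(i)} equals X_i up to a μ-null set for every i ∈ I, and X₀ equals X'₀ up to a μ-null set. -/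
open MeasureTheory Filter Set Topology
open scoped ENNReal Real

namespace Digraphon

variable {Ω : Type*} [MeasurableSpace Ω]

theorem aeEqSet_iff (μ : Measure Ω) (A B : Set Ω) : AEEqSet μ A B ↔ A =ᵐ[μ] B :=
  measure_symmDiff_eq_zero_iff

theorem sc_of_subset {μ : Measure Ω} {Γ : Ω → Ω → ℝ} {X Y : Set Ω}
    (hX : StronglyConnectedIn μ Γ X) (hY : MeasurableSet Y) (hYX : Y ⊆ X)
    (h0 : μ (X \ Y) = 0) : StronglyConnectedIn μ Γ Y := by
  obtain ⟨hXm, hXp, hXc⟩ := hX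
  refine ⟨hY, ?_, ?_⟩
  · rw [measure_eq_measure_of_null_sdiff hYX h0]
    exact hXp
  · intro A B hA hB hAB hd hAp hBp
    have hae : (A ∪ (X \ Y) : Set Ω) =ᵐ[μ] A := union_ae_eq_left_of_ae_eq_empty
      (ae_eq_empty.2 h0)
    have := hXc (A ∪ (X \ Y)) B (hA.union (hXm.diff hY)) hB ?_ ?_
      (hAp.trans_le (measure_mono subset_union_left)) hBp
    · rwa [setIntegral_congr_set hae] at this
    · rw [union_right_comm, hAB, union_diff_cancel hYX]
    · refine Disjoint.union_left hd ?_
      have hBY : B ⊆ Y := hAB ▸ subset_union_right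
      exact disjoint_sdiff_left.mono_right hBY

theorem component_ae_eq {μ : Measure Ω} {Γ : Ω → Ω → ℝ} {X Y : Set Ω}
    (hX : StrongComponent μ Γ X) (hY : StrongComponent μ Γ Y)
    (h : μ (X ∩ Y) ≠ 0) : X =ᵐ[μ] Y := by
  have h1 : μ (Y \ X) = 0 := by
    by_contra hne
    exact hX.2 Y hY.1.1 (pos_iff_ne_zero.2 h) (pos_iff_ne_zero.2 hne) hY.1
  have h2 : μ (X \ Y) = 0 := by
    by_contra hne
    rw [inter_comm] at h
    exact hY.2 X hX.1.1 (pos_iff_ne_zero.2 h) (pos_iff_ne_zero.2 hne) hX.1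
  exact (ae_le_set.2 h2).antisymm (ae_le_set.2 h1)

theorem null_of_inter_parts {μ : Measure Ω} {J : Set ℕ} {X' : ℕ → Set Ω}
    (hcover : (⋃ i ∈ insert 0 J, X' i) = Set.univ) {S : Set Ω}
    (h : ∀ j ∈ J, μ (S ∩ X' j) = 0) : μ (S \ X' 0) = 0 := by
  refine measure_mono_null (t := ⋃ j ∈ J, S ∩ X' j) ?_ ?_
  · rintro x ⟨hxS, hx0⟩
    have hx : x ∈ ⋃ i ∈ insert 0 J, X' i := hcover ▸ mem_univ x
    simp only [mem_iUnion] at hx ⊢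
    obtain ⟨i, hi, hxi⟩ := hx
    rcases hi with rfl | hi
    · exact absurd hxi hx0
    · exact ⟨i, hi, hxS, hxi⟩
  · exact (measure_biUnion_null_iff J.to_countable).2 h

theorem exists_partner {μ : Measure Ω} {Γ : Ω → Ω → ℝ} {J : Set ℕ} {X' : ℕ → Set Ω}
    (hm : ∀ i ∈ insert 0 J, MeasurableSet (X' i))
    (hcover : (⋃ i ∈ insert 0 J, X' i) = Set.univ)
    (h0 : μ (X' 0) = 0 ∨ Fragmented μ Γ (X' 0))
    (hcomp : ∀ i ∈ J, StrongComponent μ Γ (X' i))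
    {S : Set Ω} (hS : StrongComponent μ Γ S) : ∃ j : J, S =ᵐ[μ] X' j := by
  by_cases h : ∀ j ∈ J, μ (S ∩ X' j) = 0
  · exfalso
    have hn := null_of_inter_parts hcover h
    have hsc : StronglyConnectedIn μ Γ (S ∩ X' 0) :=
      sc_of_subset hS.1 (hS.1.1.inter (hm 0 (mem_insert _ _))) inter_subset_left
        (by rwa [diff_self_inter])
    rcases h0 with h0 | h0
    · exact hsc.2.1.ne' (measure_mono_null inter_subset_right h0)
    · exact h0 _ inter_subset_right hsc.1 hsc
  · push Not at h
    obtain ⟨j, hj, hne⟩ := h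
    exact ⟨⟨j, hj⟩, component_ae_eq hS (hcomp j hj) hne⟩

theorem eq_of_ae_eq {μ : Measure Ω} {Γ : Ω → Ω → ℝ} {J : Set ℕ} {X : ℕ → Set Ω}
    (hd : (insert 0 J).PairwiseDisjoint X)
    (hcomp : ∀ i ∈ J, StrongComponent μ Γ (X i))
    {i j : J} (h : X i =ᵐ[μ] X j) : i = j := by
  by_contra hne
  have hdis : Disjoint (X i) (X j) := hd (mem_insert_of_mem _ i.2) (mem_insert_of_mem _ j.2)
    (fun e => hne (Subtype.ext e))
  have h1 : μ (X i \ X j) = 0 := ae_le_set.1 h.le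
  rw [hdis.sdiff_eq_left] at h1
  exact (hcomp i i.2).1.2.1.ne' h1

theorem zero_part_null {μ : Measure Ω} {J J' : Set ℕ} {X X' : ℕ → Set Ω} (hJ : 0 ∉ J)
    (hd : (insert 0 J).PairwiseDisjoint X)
    (hcover : (⋃ i ∈ insert 0 J', X' i) = Set.univ)
    (h : ∀ j : J', ∃ i : J, X' j =ᵐ[μ] X i) : μ (X 0 \ X' 0) = 0 := by
  refine null_of_inter_parts hcover fun j hj => ?_
  obtain ⟨i, hi⟩ := h ⟨j, hj⟩
  have hdis : Disjoint (X 0) (X i) := hd (mem_insert _ _) (mem_insert_of_mem _ i.2)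
    (fun e => hJ (e ▸ i.2))
  have : (X 0 ∩ X' j : Set Ω) =ᵐ[μ] (X 0 ∩ X i : Set Ω) := (ae_eq_refl _).inter hi
  rw [measure_congr this, hdis.inter_eq, measure_empty]

/-- Uniqueness (modulo nullsets) of the decomposition of a digraphon into
strong components and a fragmented (or null) set. -/
theorem decomposition_into_strong_components_unique
    {Ω : Type*} [MeasurableSpace Ω] (μ : Measure Ω) [IsProbabilityMeasure μ]
    (Γ : Ω → Ω → ℝ) (hΓ : IsDigraphon Γ)
    (I I' : Set ℕ) (hI : 0 ∉ I) (hI' : 0 ∉ I')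
    (X X' : ℕ → Set Ω)
    (hXmeas : ∀ i ∈ insert 0 I, MeasurableSet (X i))
    (hXdisj : (insert 0 I).PairwiseDisjoint X)
    (hXcover : (⋃ i ∈ insert 0 I, X i) = Set.univ)
    (hX0 : μ (X 0) = 0 ∨ Fragmented μ Γ (X 0))
    (hXcomp : ∀ i ∈ I, StrongComponent μ Γ (X i))
    (hX'meas : ∀ i ∈ insert 0 I', MeasurableSet (X' i))
    (hX'disj : (insert 0 I').PairwiseDisjoint X')
    (hX'cover : (⋃ i ∈ insert 0 I', X' i) = Set.univ)
    (hX'0 : μ (X' 0) = 0 ∨ Fragmented μ Γ (X' 0))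
    (hX'comp : ∀ i ∈ I', StrongComponent μ Γ (X' i)) :
    ∃ φ : I → I', Function.Bijective φ ∧
      (∀ i : I, AEEqSet μ (X i) (X' (φ i))) ∧ AEEqSet μ (X 0) (X' 0) := by
  have key : ∀ i : I, ∃ j : I', X i =ᵐ[μ] X' j := fun i =>
    exists_partner hX'meas hX'cover hX'0 hX'comp (hXcomp i i.2)
  have key' : ∀ i : I', ∃ j : I, X' i =ᵐ[μ] X j := fun i =>
    exists_partner hXmeas hXcover hX0 hXcomp (hX'comp i i.2)
  choose φ hφ using key
  refine ⟨φ, ⟨fun i j hij => ?_, fun j => ?_⟩, fun i => (aeEqSet_iff _ _ _).2 (hφ i), ?_⟩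
  · refine eq_of_ae_eq hXdisj hXcomp ((hφ i).trans ?_)
    rw [hij]
    exact (hφ j).symm
  · obtain ⟨i, hi⟩ := key' j
    exact ⟨i, eq_of_ae_eq hX'disj hX'comp (hi.trans (hφ i)).symm⟩
  · exact measure_union_null (zero_part_null hI hXdisj hX'cover key')
      (zero_part_null hI' hX'disj hXcover fun i => ⟨φ i, hφ i⟩)

end Digraphon
end

section
/- Let Γ be a digraphon on a probability space (Ω,μ) and let Ω = X₀ ⊔ ⨆_{i∈I} X_i be its decomposition into strong components X_i (i ∈ I) and a fragmented (or null) set X₀. Then ρ(Γ) = sup_{i∈I} ρ(Γ⟦X_i⟧) (with the convention sup ∅ = 0), and if I ≠ ∅ this supremum is attained by some i ∈ I. -/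
open MeasureTheory Filter Set Topology
open scoped ENNReal Real

namespace Digraphon

variable {Ω : Type*} [MeasurableSpace Ω]

/-- Bounded measurable (uncurried) kernels. -/
def BK (F : Ω × Ω → ℝ) : Prop := Measurable F ∧ ∃ M : ℝ, ∀ p, ‖F p‖ ≤ M

noncomputable def kop (μ : Measure Ω) (F : Ω × Ω → ℝ) (f : Ω → ℂ) : Ω → ℂ :=
  fun x => ∫ y, f y * (F (y, x) : ℂ) ∂μ

noncomputable def hsn (μ : Measure Ω) (F : Ω × Ω → ℝ) : ℝ≥0∞ :=
  (∫⁻ p, ‖F p‖ₑ ^ (2:ℝ) ∂(μ.prod μ)) ^ (1/2 : ℝ)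

lemma kop_aesm (μ : Measure Ω) [IsProbabilityMeasure μ] {F : Ω × Ω → ℝ} (hF : Measurable F)
    {f : Ω → ℂ} (hf : AEStronglyMeasurable f μ) : AEStronglyMeasurable (kop μ F f) μ := by
  have : AEStronglyMeasurable (fun p : Ω × Ω => f p.2 * (F (p.2, p.1) : ℂ)) (μ.prod μ) := by
    refine hf.comp_snd.mul ?_
    exact (Complex.measurable_ofReal.comp (hF.comp measurable_swap)).aestronglyMeasurable
  exact this.integral_prod_right'

lemma kop_bound (μ : Measure Ω) [IsProbabilityMeasure μ] {F : Ω × Ω → ℝ} (hF : Measurable F)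
    {f : Ω → ℂ} (hf : AEStronglyMeasurable f μ) :
    eLpNorm (kop μ F f) 2 μ ≤ hsn μ F * eLpNorm f 2 μ := by
  have key : ∀ x, ‖kop μ F f x‖ₑ ^ (2:ℝ) ≤
      (∫⁻ y, ‖f y‖ₑ ^ (2:ℝ) ∂μ) * (∫⁻ y, ‖F (y, x)‖ₑ ^ (2:ℝ) ∂μ) := by
    intro x
    have h1 : ‖kop μ F f x‖ₑ ≤ ∫⁻ y, ((fun y => ‖f y‖ₑ) * (fun y => ‖F (y, x)‖ₑ)) y ∂μ := by
      refine (enorm_integral_le_lintegral_enorm _).trans (le_of_eq ?_)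
      refine lintegral_congr fun y => ?_
      simp [enorm_eq_nnnorm]
    have h2 := ENNReal.lintegral_mul_le_Lp_mul_Lq μ (p := 2) (q := 2)
      ⟨by norm_num, by norm_num, by norm_num⟩ hf.enorm
      ((hF.comp (measurable_id.prodMk measurable_const)).enorm.aemeasurable (f := fun y => ‖F (y, x)‖ₑ))
    refine (ENNReal.rpow_le_rpow (h1.trans h2) (by norm_num : (0:ℝ) ≤ 2)).trans (le_of_eq ?_)
    rw [ENNReal.mul_rpow_of_nonneg _ _ (by norm_num), ← ENNReal.rpow_mul, ← ENNReal.rpow_mul]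
    norm_num
  rw [eLpNorm_eq_lintegral_rpow_enorm_toReal (by norm_num) (by norm_num), eLpNorm_eq_lintegral_rpow_enorm_toReal (by norm_num) (by norm_num), hsn]
  simp only [ENNReal.toReal_ofNat]
  rw [← ENNReal.mul_rpow_of_nonneg _ _ (by norm_num)]
  refine ENNReal.rpow_le_rpow ?_ (by norm_num)
  have hm : Measurable (fun p : Ω × Ω => ‖F p‖ₑ ^ (2:ℝ)) := hF.enorm.pow_const _
  rw [lintegral_prod_symm' _ hm, mul_comm]
  refine (lintegral_mono key).trans ?_
  rw [lintegral_const_mul _ hm.lintegral_prod_left']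

lemma hsn_lt_top (μ : Measure Ω) [IsProbabilityMeasure μ] {F : Ω × Ω → ℝ} (hF : BK F) :
    hsn μ F < ∞ := by
  obtain ⟨_, M, hM⟩ := hF
  have h : (∫⁻ p, ‖F p‖ₑ ^ (2:ℝ) ∂(μ.prod μ)) ≤ ∫⁻ p, (ENNReal.ofReal M) ^ (2:ℝ) ∂(μ.prod μ) := by
    refine lintegral_mono fun p => ENNReal.rpow_le_rpow ?_ (by norm_num)
    rw [← ofReal_norm]
    exact ENNReal.ofReal_le_ofReal (hM p)
  rw [hsn]
  refine ENNReal.rpow_lt_top_of_nonneg (by norm_num) (ne_of_lt (h.trans_lt ?_))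
  simp only [lintegral_const, measure_univ, mul_one]
  exact ENNReal.rpow_lt_top_of_nonneg (by norm_num) (by simp)

lemma kop_memLp (μ : Measure Ω) [IsProbabilityMeasure μ] {F : Ω × Ω → ℝ} (hF : BK F)
    {f : Ω → ℂ} (hf : MemLp f 2 μ) : MemLp (kop μ F f) 2 μ :=
  ⟨kop_aesm μ hF.1 hf.1, (kop_bound μ hF.1 hf.1).trans_lt
    (ENNReal.mul_lt_top (hsn_lt_top μ hF) hf.2)⟩

lemma kint (μ : Measure Ω) [IsProbabilityMeasure μ] {F : Ω × Ω → ℝ} (hF : BK F)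
    {f : Ω → ℂ} (hf : MemLp f 2 μ) (x : Ω) : Integrable (fun y => f y * (F (y, x) : ℂ)) μ := by
  obtain ⟨hm, M, hM⟩ := hF
  refine (hf.integrable (by norm_num)).mul_bdd (c := M) ?_ ?_
  · exact (Complex.measurable_ofReal.comp
      (hm.comp (measurable_id.prodMk measurable_const))).aestronglyMeasurable
  · exact Eventually.of_forall fun y => by simpa using hM (y, x)

lemma kop_congr (μ : Measure Ω) {F : Ω × Ω → ℝ} {f g : Ω → ℂ} (h : f =ᵐ[μ] g) :
    kop μ F f = kop μ F g := by
  funext x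
  refine integral_congr_ae ?_
  filter_upwards [h] with y hy
  rw [hy]

/-- The kernel operator on `L²`. -/
noncomputable def kT (μ : Measure Ω) [IsProbabilityMeasure μ] (F : Ω × Ω → ℝ) (hF : BK F) :
    Lp ℂ 2 μ →L[ℂ] Lp ℂ 2 μ :=
  LinearMap.mkContinuous
    { toFun := fun f => (kop_memLp μ hF (Lp.memLp f)).toLp
      map_add' := by
        intro f g
        rw [← MemLp.toLp_add]
        refine MemLp.toLp_congr _ _ (Eventually.of_forall fun x => ?_)
        rw [kop_congr μ (Lp.coeFn_add f g)]
        simp only [kop, Pi.add_apply, add_mul]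
        exact integral_add (kint μ hF (Lp.memLp f) x) (kint μ hF (Lp.memLp g) x)
      map_smul' := by
        intro c f
        rw [RingHom.id_apply, ← MemLp.toLp_const_smul]
        refine MemLp.toLp_congr _ _ (Eventually.of_forall fun x => ?_)
        rw [kop_congr μ (Lp.coeFn_smul c f)]
        simp only [kop, Pi.smul_apply, smul_eq_mul, mul_assoc]
        exact integral_const_mul _ _ } (hsn μ F).toReal (by
    intro f
    simp only [LinearMap.coe_mk, AddHom.coe_mk, Lp.norm_toLp]
    rw [Lp.norm_def, ← ENNReal.toReal_mul]
    exact ENNReal.toReal_mono (ENNReal.mul_lt_top (hsn_lt_top μ hF) (Lp.memLp f).2).ne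
      (kop_bound μ hF.1 (Lp.memLp f).1))

lemma kT_coe (μ : Measure Ω) [IsProbabilityMeasure μ] {F : Ω × Ω → ℝ} (hF : BK F)
    (f : Lp ℂ 2 μ) : (kT μ F hF f : Ω → ℂ) =ᵐ[μ] kop μ F f :=
  MemLp.coeFn_toLp (kop_memLp μ hF (Lp.memLp f))

lemma kT_norm (μ : Measure Ω) [IsProbabilityMeasure μ] {F : Ω × Ω → ℝ} (hF : BK F) :
    ‖kT μ F hF‖ ≤ (hsn μ F).toReal :=
  LinearMap.mkContinuous_norm_le _ ENNReal.toReal_nonneg _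

lemma BK.add {F G : Ω × Ω → ℝ} (hF : BK F) (hG : BK G) : BK (F + G) := by
  obtain ⟨h1, M, hM⟩ := hF
  obtain ⟨h2, N, hN⟩ := hG
  exact ⟨h1.add h2, M + N, fun p => (norm_add_le _ _).trans (add_le_add (hM p) (hN p))⟩

lemma BK.smul {F : Ω × Ω → ℝ} (hF : BK F) (c : ℝ) : BK (c • F) := by
  obtain ⟨h1, M, hM⟩ := hF
  refine ⟨h1.const_smul c, ‖c‖ * M, fun p => ?_⟩
  simpa using mul_le_mul_of_nonneg_left (hM p) (abs_nonneg c)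

lemma BK.sub {F G : Ω × Ω → ℝ} (hF : BK F) (hG : BK G) : BK (F - G) := by
  obtain ⟨h1, M, hM⟩ := hF
  obtain ⟨h2, N, hN⟩ := hG
  exact ⟨h1.sub h2, M + N, fun p => (norm_sub_le _ _).trans (add_le_add (hM p) (hN p))⟩

lemma kT_add (μ : Measure Ω) [IsProbabilityMeasure μ] {F G : Ω × Ω → ℝ} (hF : BK F) (hG : BK G) :
    kT μ (F + G) (hF.add hG) = kT μ F hF + kT μ G hG := by
  refine ContinuousLinearMap.ext fun f => Lp.ext ?_
  refine (kT_coe μ _ f).trans (EventuallyEq.trans ?_ (Lp.coeFn_add (kT μ F hF f) (kT μ G hG f)).symm)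
  filter_upwards [kT_coe μ hF f, kT_coe μ hG f] with x h1 h2
  rw [Pi.add_apply, h1, h2]
  simp only [kop, Pi.add_apply, Complex.ofReal_add, mul_add]
  exact integral_add (kint μ hF (Lp.memLp f) x) (kint μ hG (Lp.memLp f) x)

lemma kT_sub (μ : Measure Ω) [IsProbabilityMeasure μ] {F G : Ω × Ω → ℝ} (hF : BK F) (hG : BK G) :
    kT μ (F - G) (hF.sub hG) = kT μ F hF - kT μ G hG := by
  refine ContinuousLinearMap.ext fun f => Lp.ext ?_
  refine (kT_coe μ _ f).trans (EventuallyEq.trans ?_ (Lp.coeFn_sub (kT μ F hF f) (kT μ G hG f)).symm)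
  filter_upwards [kT_coe μ hF f, kT_coe μ hG f] with x h1 h2
  rw [Pi.sub_apply, h1, h2]
  simp only [kop, Pi.sub_apply, Complex.ofReal_sub, mul_sub]
  exact integral_sub (kint μ hF (Lp.memLp f) x) (kint μ hG (Lp.memLp f) x)

lemma kT_smul (μ : Measure Ω) [IsProbabilityMeasure μ] {F : Ω × Ω → ℝ} (hF : BK F) (c : ℝ) :
    kT μ (c • F) (hF.smul c) = (c : ℂ) • kT μ F hF := by
  refine ContinuousLinearMap.ext fun f => Lp.ext ?_
  refine (kT_coe μ _ f).trans (EventuallyEq.trans ?_ (Lp.coeFn_smul (c : ℂ) (kT μ F hF f)).symm)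
  filter_upwards [kT_coe μ hF f] with x h1
  rw [Pi.smul_apply, h1]
  simp only [kop, Pi.smul_apply, smul_eq_mul, Complex.ofReal_mul]
  rw [← integral_const_mul]
  refine integral_congr_ae (Eventually.of_forall fun y => ?_)
  simp only
  ring

/-- Bounded pointwise convergence of kernels gives operator norm convergence. -/
lemma kT_tendsto (μ : Measure Ω) [IsProbabilityMeasure μ] {F : ℕ → Ω × Ω → ℝ} {G : Ω × Ω → ℝ}
    (hF : ∀ n, BK (F n)) (hG : BK G) (M : ℝ) (hM : ∀ n p, ‖F n p‖ ≤ M)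
    (hlim : ∀ p, Tendsto (fun n => F n p) atTop (𝓝 (G p))) :
    Tendsto (fun n => kT μ (F n) (hF n)) atTop (𝓝 (kT μ G hG)) := by
  rw [tendsto_iff_norm_sub_tendsto_zero]
  have hGM : ∀ p, ‖G p‖ ≤ M := fun p =>
    le_of_tendsto (hlim p).norm (Eventually.of_forall fun n => hM n p)
  have h1 : Tendsto (fun n => ∫⁻ p, ‖(F n - G) p‖ₑ ^ (2:ℝ) ∂(μ.prod μ)) atTop (𝓝 0) := by
    have := tendsto_lintegral_of_dominated_convergence (μ := μ.prod μ)
      (F := fun n p => ‖(F n - G) p‖ₑ ^ (2:ℝ)) (f := fun _ => 0)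
      (fun _ => (ENNReal.ofReal (M + M)) ^ (2:ℝ))
      (fun n => ((hF n).sub hG).1.enorm.pow_const _)
      (fun n => Eventually.of_forall fun p => ?_) ?_ (Eventually.of_forall fun p => ?_)
    · simpa using this
    · refine ENNReal.rpow_le_rpow ?_ (by norm_num)
      rw [← ofReal_norm]
      exact ENNReal.ofReal_le_ofReal ((norm_sub_le _ _).trans (add_le_add (hM n p) (hGM p)))
    · simp only [lintegral_const, measure_univ, mul_one]
      exact (ENNReal.rpow_lt_top_of_nonneg (by norm_num) (by simp)).ne
    · have h2 : Tendsto (fun n => ‖(F n - G) p‖ₑ) atTop (𝓝 0) := by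
        have := ((hlim p).sub_const (G p)).enorm
        simpa using this
      have h3 := (ENNReal.continuous_rpow_const (y := 2)).tendsto 0 |>.comp h2
      simpa [Function.comp_def] using h3
  have h2 : Tendsto (fun n => (hsn μ (F n - G)).toReal) atTop (𝓝 0) := by
    have h3 := (ENNReal.continuous_rpow_const (y := 1/2)).tendsto 0 |>.comp h1
    have h4 := (ENNReal.tendsto_toReal (a := 0) (by simp)).comp
      (by simpa [Function.comp_def] using h3)
    simpa [Function.comp_def, hsn] using h4
  refine squeeze_zero (fun n => norm_nonneg _) (fun n => ?_) h2
  rw [← kT_sub μ (hF n) hG]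
  exact kT_norm μ _

/-! ### Compactness -/

lemma BK_ind {S : Set (Ω × Ω)} (hS : MeasurableSet S) : BK (S.indicator (fun _ => (1:ℝ))) := by
  refine ⟨measurable_const.indicator hS, 1, fun p => ?_⟩
  by_cases h : p ∈ S <;> simp [h]

lemma compact_congr (μ : Measure Ω) [IsProbabilityMeasure μ] {F G : Ω × Ω → ℝ} {hF : BK F}
    (h : IsCompactOperator (kT μ F hF)) (e : G = F) (hG : BK G) :
    IsCompactOperator (kT μ G hG) := by
  subst e
  exact h

lemma compact_rect (μ : Measure Ω) [IsProbabilityMeasure μ] {A B : Set Ω}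
    (hA : MeasurableSet A) (hB : MeasurableSet B) (h) :
    IsCompactOperator (kT μ ((A ×ˢ B).indicator (fun _ => (1:ℝ))) h) := by
  set a : Lp ℂ 2 μ := indicatorConstLp 2 hA (measure_ne_top μ A) 1 with ha
  set b : Lp ℂ 2 μ := indicatorConstLp 2 hB (measure_ne_top μ B) 1 with hb
  have : kT μ ((A ×ˢ B).indicator (fun _ => (1:ℝ))) h =
      (ContinuousLinearMap.toSpanSingleton ℂ b) ∘L (innerSL ℂ a) := by
    refine ContinuousLinearMap.ext fun f => Lp.ext ?_
    have h1 : ((ContinuousLinearMap.toSpanSingleton ℂ b) ∘L (innerSL ℂ a)) f =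
        (∫ y in A, f y ∂μ) • b := by
      simp [ha, L2.inner_indicatorConstLp_one]
    rw [h1]
    refine (kT_coe μ h f).trans (EventuallyEq.trans ?_ (Lp.coeFn_smul _ b).symm)
    have hbc : (b : Ω → ℂ) =ᵐ[μ] B.indicator (fun _ => (1:ℂ)) := indicatorConstLp_coeFn
    filter_upwards [hbc] with x hx
    rw [Pi.smul_apply, hx, ← integral_indicator hA, kop]
    by_cases hxB : x ∈ B
    · simp only [hxB, indicator_of_mem, smul_eq_mul, mul_one]
      refine integral_congr_ae (Eventually.of_forall fun y => ?_)
      by_cases hy : y ∈ A <;> simp [hy, hxB]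
    · simp [hxB]
  rw [this]
  have hc : IsCompactOperator (ContinuousLinearMap.toSpanSingleton ℂ b) :=
    isCompactOperator_of_locallyCompactSpace_rng (ContinuousLinearMap.toSpanSingleton ℂ b)
  exact hc.comp_clm (innerSL ℂ a)

lemma compact_ind (μ : Measure Ω) [IsProbabilityMeasure μ] {S : Set (Ω × Ω)}
    (hS : MeasurableSet S) : ∀ h, IsCompactOperator (kT μ (S.indicator (fun _ => (1:ℝ))) h) := by
  induction S, hS using MeasurableSpace.induction_on_inter generateFrom_prod.symm isPiSystem_prod with
  | empty =>
    intro h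
    have := compact_rect μ (A := ∅) (B := ∅) MeasurableSet.empty MeasurableSet.empty
      (by simpa using h)
    simpa using this
  | basic t ht =>
    intro h
    obtain ⟨A, hA, B, hB, rfl⟩ := ht
    exact compact_rect μ hA hB h
  | compl t ht ih =>
    intro h
    have h1 : BK ((univ : Set (Ω × Ω)).indicator (fun _ => (1:ℝ))) := BK_ind MeasurableSet.univ
    have h2 := compact_rect μ (A := univ) (B := univ) MeasurableSet.univ MeasurableSet.univ
      (by simpa using h1)
    simp only [univ_prod_univ] at h2
    have h3 := h2.sub (ih (BK_ind ht))
    rw [← FunLike.coe_sub, ← kT_sub μ h1 (BK_ind ht)] at h3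
    refine compact_congr μ h3 ?_ h
    funext p
    by_cases hp : p ∈ t <;> simp [hp]
  | iUnion f hd hm ih =>
    intro h
    have hfin : ∀ n : ℕ, ∀ h, IsCompactOperator
        (kT μ ((⋃ i ∈ Finset.range n, f i).indicator (fun _ => (1:ℝ))) h) := by
      intro n
      induction n with
      | zero =>
        intro h
        have := compact_rect μ (A := ∅) (B := ∅) MeasurableSet.empty MeasurableSet.empty
          (by simpa using BK_ind MeasurableSet.empty)
        simpa using this
      | succ n ihn =>
        intro h
        have hmn : MeasurableSet (⋃ i ∈ Finset.range n, f i) :=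
          Finset.measurableSet_biUnion _ fun i _ => hm i
        have h3 := (ihn (BK_ind hmn)).add (ih n (BK_ind (hm n)))
        rw [← FunLike.coe_add, ← kT_add μ (BK_ind hmn) (BK_ind (hm n))] at h3
        refine compact_congr μ h3 ?_ h
        rw [Finset.range_add_one, Finset.set_biUnion_insert, union_comm]
        refine (indicator_union_of_disjoint ?_ _)
        simp only [disjoint_iUnion_left]
        intro i hi
        exact hd (Finset.mem_range.1 hi).ne
    have hmn : ∀ n, MeasurableSet (⋃ i ∈ Finset.range n, f i) := fun n =>
          Finset.measurableSet_biUnion _ fun i _ => hm i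
    refine isCompactOperator_of_tendsto
      (kT_tendsto μ (fun n => BK_ind (hmn n)) h 1 (fun n p => ?_) (fun p => ?_))
      (Eventually.of_forall fun n => hfin n _)
    · by_cases hp : p ∈ ⋃ i ∈ Finset.range n, f i
      · rw [indicator_of_mem hp]; simp
      · rw [indicator_of_notMem hp]; simp
    · by_cases hp : p ∈ ⋃ i, f i
      · rw [indicator_of_mem hp]
        obtain ⟨i, hi⟩ := mem_iUnion.1 hp
        refine tendsto_const_nhds.congr' ?_
        filter_upwards [eventually_gt_atTop i] with n hn
        rw [indicator_of_mem]
        simp only [mem_iUnion]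
        exact ⟨i, Finset.mem_range.2 hn, hi⟩
      · rw [indicator_of_notMem hp]
        refine tendsto_const_nhds.congr fun n => ?_
        rw [indicator_of_notMem]
        intro h'
        simp only [mem_iUnion] at h' hp
        obtain ⟨i, _, hi⟩ := h'
        exact hp ⟨i, hi⟩

lemma compact_simple (μ : Measure Ω) [IsProbabilityMeasure μ] (s : SimpleFunc (Ω × Ω) ℝ) :
    ∃ h : BK (s : Ω × Ω → ℝ), IsCompactOperator (kT μ s h) := by
  induction s using SimpleFunc.induction with
  | const c hS =>
    rename_i S
    have he : (⇑(SimpleFunc.piecewise S hS (SimpleFunc.const _ c) (SimpleFunc.const _ 0)) :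
        Ω × Ω → ℝ) = c • S.indicator (fun _ => (1:ℝ)) := by
      funext p
      by_cases hp : p ∈ S <;> simp [hp]
    rw [he]
    refine ⟨(BK_ind hS).smul c, ?_⟩
    rw [kT_smul μ (BK_ind hS)]
    exact (compact_ind μ hS (BK_ind hS)).smul (c : ℂ)
  | add hd h1 h2 =>
    obtain ⟨a, ha⟩ := h1
    obtain ⟨b, hb⟩ := h2
    rw [SimpleFunc.coe_add]
    refine ⟨a.add b, ?_⟩
    rw [kT_add μ a b]
    exact ha.add hb

lemma compact_kT (μ : Measure Ω) [IsProbabilityMeasure μ] {F : Ω × Ω → ℝ} (hF : BK F) :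
    IsCompactOperator (kT μ F hF) := by
  obtain ⟨hm, M, hM⟩ := id hF
  have hM0 : 0 ≤ |M| := abs_nonneg M
  have hM' : ∀ p, ‖F p‖ ≤ |M| := fun p => (hM p).trans (le_abs_self M)
  refine isCompactOperator_of_tendsto
    (kT_tendsto μ (F := fun n => hm.stronglyMeasurable.approxBounded |M| n)
      (fun n => (compact_simple μ _).1) hF |M|
      (fun n p => StronglyMeasurable.norm_approxBounded_le _ hM0 n p)
      (fun p => StronglyMeasurable.tendsto_approxBounded_of_norm_le _ (hM' p)))
    (Eventually.of_forall fun n => (compact_simple μ _).2)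

/-! ### Spectral radius -/

instance nontriv_Lp (μ : Measure Ω) [IsProbabilityMeasure μ] : Nontrivial (Lp ℂ 2 μ) := by
  refine ⟨⟨indicatorConstLp 2 MeasurableSet.univ (measure_ne_top μ univ) 1, 0, ?_⟩⟩
  intro h
  have := congrArg norm h
  rw [norm_indicatorConstLp (by norm_num) (by norm_num)] at this
  simp at this

lemma isEig_iff (μ : Measure Ω) [IsProbabilityMeasure μ] {Γ : Ω → Ω → ℝ}
    (h : BK (Function.uncurry Γ)) (τ : ℂ) :
    IsEigenvalue μ Γ τ ↔ Module.End.HasEigenvalue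
      ((kT μ (Function.uncurry Γ) h : Lp ℂ 2 μ →L[ℂ] Lp ℂ 2 μ) : Module.End ℂ (Lp ℂ 2 μ)) τ := by
  constructor
  · rintro ⟨f, hf, hf0, he⟩
    refine Module.End.hasEigenvalue_of_hasEigenvector (x := hf.toLp) ⟨?_, ?_⟩
    · rw [Module.End.mem_eigenspace_iff]
      refine Lp.ext ?_
      refine (kT_coe μ h hf.toLp).trans (EventuallyEq.trans ?_ (Lp.coeFn_smul τ hf.toLp).symm)
      rw [kop_congr μ hf.coeFn_toLp]
      filter_upwards [he, hf.coeFn_toLp] with x hx hx2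
      rw [Pi.smul_apply, hx2, smul_eq_mul, ← hx]
      rfl
    · intro h0
      exact hf0 (hf.coeFn_toLp.symm.trans (h0 ▸ Lp.coeFn_zero ℂ 2 μ))
  · intro he
    obtain ⟨f, hf, hf0⟩ := he.exists_hasEigenvector
    rw [Module.End.mem_eigenspace_iff] at hf
    refine ⟨f, Lp.memLp f, fun h0 => hf0 (Lp.ext (h0.trans (Lp.coeFn_zero ℂ 2 μ).symm)), ?_⟩
    have h1 := kT_coe μ h f
    have h2 : kT μ (Function.uncurry Γ) h f = τ • f := hf
    rw [h2] at h1
    filter_upwards [h1, Lp.coeFn_smul τ f] with x hx hx2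
    rw [hx2, Pi.smul_apply, smul_eq_mul] at hx
    rw [hx]
    rfl

lemma specRad_facts (μ : Measure Ω) [IsProbabilityMeasure μ] {Γ : Ω → Ω → ℝ}
    (h : BK (Function.uncurry Γ)) :
    (ENNReal.ofReal (specRad μ Γ) = spectralRadius ℂ (kT μ (Function.uncurry Γ) h)) ∧
    (∀ τ, IsEigenvalue μ Γ τ → ‖τ‖ ≤ specRad μ Γ) ∧ 0 ≤ specRad μ Γ ∧
    (0 < specRad μ Γ → ∃ τ, IsEigenvalue μ Γ τ ∧ ‖τ‖ = specRad μ Γ) := by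
  set T := kT μ (Function.uncurry Γ) h with hT
  obtain ⟨z, hz, hzr⟩ := spectrum.exists_nnnorm_eq_spectralRadius T
  have h1 : ∀ τ, IsEigenvalue μ Γ τ → ‖τ‖ ≤ ‖z‖ := by
    intro τ hτ
    by_cases h0 : τ = 0
    · simp [h0]
    have h2 : τ ∈ spectrum ℂ T :=
      ((compact_kT μ h).hasEigenvalue_iff_mem_spectrum h0).1 ((isEig_iff μ h τ).1 hτ)
    have h3 : (‖τ‖₊ : ℝ≥0∞) ≤ spectralRadius ℂ T := le_iSup₂ (f := fun k (_ : k ∈ spectrum ℂ T) => (‖k‖₊ : ℝ≥0∞)) τ h2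
    rw [← hzr] at h3
    exact_mod_cast h3
  have h2 : z ≠ 0 → IsEigenvalue μ Γ z := fun h0 =>
    (isEig_iff μ h z).2 (((compact_kT μ h).hasEigenvalue_iff_mem_spectrum h0).2 hz)
  have h3 : IsGreatest (insert 0 {r : ℝ | ∃ τ : ℂ, IsEigenvalue μ Γ τ ∧ ‖τ‖ = r}) ‖z‖ := by
    constructor
    · by_cases h0 : z = 0
      · simp [h0]
      · exact Or.inr ⟨z, h2 h0, rfl⟩
    · rintro r (rfl | ⟨τ, hτ, rfl⟩)
      · exact norm_nonneg z
      · exact h1 τ hτ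
  have h4 : specRad μ Γ = ‖z‖ := h3.csSup_eq
  rw [h4]
  refine ⟨?_, h1, norm_nonneg z, fun h0 => ⟨z, h2 (norm_pos_iff.1 h0), rfl⟩⟩
  rw [← hzr, ofReal_norm]
  rfl

/-- Domination relation. -/
def Dom (μ : Measure Ω) (f g : Lp ℂ 2 μ) : Prop :=
  ∀ᵐ x ∂μ, g x = (‖g x‖ : ℂ) ∧ ‖f x‖ ≤ ‖g x‖

lemma dom_step (μ : Measure Ω) [IsProbabilityMeasure μ] {F G : Ω × Ω → ℝ} (hF : BK F) (hG : BK G)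
    (h0 : ∀ p, 0 ≤ F p) (hFG : ∀ p, F p ≤ G p) {f g : Lp ℂ 2 μ} (h : Dom μ f g) :
    Dom μ (kT μ F hF f) (kT μ G hG g) := by
  filter_upwards [kT_coe μ hF f, kT_coe μ hG g] with x h1 h2
  rw [h1, h2]
  have e : kop μ G g x = ((∫ y, ‖g y‖ * G (y, x) ∂μ : ℝ) : ℂ) := by
    rw [← integral_complex_ofReal]
    refine integral_congr_ae ?_
    filter_upwards [h] with y hy
    rw [Complex.ofReal_mul, ← hy.1]
  have hn : 0 ≤ ∫ y, ‖g y‖ * G (y, x) ∂μ :=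
    integral_nonneg fun y => mul_nonneg (norm_nonneg _) ((h0 _).trans (hFG _))
  have e2 : ‖kop μ G g x‖ = ∫ y, ‖g y‖ * G (y, x) ∂μ := by
    rw [e, Complex.norm_real, Real.norm_of_nonneg hn]
  refine ⟨by rw [e2, e], ?_⟩
  rw [e2]
  refine (norm_integral_le_integral_norm _).trans ?_
  have hi := (kint μ hG (Lp.memLp g) x).norm
  have hG0 : ∀ p, 0 ≤ G p := fun p => (h0 p).trans (hFG p)
  refine integral_mono_ae (kint μ hF (Lp.memLp f) x).norm ?_ ?_
  · refine hi.congr (Eventually.of_forall fun y => ?_)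
    simp [abs_of_nonneg (hG0 _)]
  · filter_upwards [h] with y hy
    simp only [norm_mul, Complex.norm_real, Real.norm_of_nonneg (h0 _)]
    exact mul_le_mul hy.2 (hFG _) (h0 _) (norm_nonneg _)

lemma norm_pow_mono (μ : Measure Ω) [IsProbabilityMeasure μ] {F G : Ω × Ω → ℝ}
    (hF : BK F) (hG : BK G) (h0 : ∀ p, 0 ≤ F p) (hFG : ∀ p, F p ≤ G p) (n : ℕ) :
    ‖(kT μ F hF) ^ n‖ ≤ ‖(kT μ G hG) ^ n‖ := by
  refine ContinuousLinearMap.opNorm_le_bound _ (norm_nonneg _) fun f => ?_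
  have hm : MemLp (fun x => ((‖f x‖ : ℝ) : ℂ)) 2 μ := (Lp.memLp f).norm.ofReal
  set g : Lp ℂ 2 μ := hm.toLp with hg
  have hgc : (g : Ω → ℂ) =ᵐ[μ] fun x => ((‖f x‖ : ℝ) : ℂ) := hm.coeFn_toLp
  have hd : Dom μ f g := by
    filter_upwards [hgc] with x hx
    rw [hx]
    simp
  have hdn : ∀ n, Dom μ ((kT μ F hF ^ n) f) ((kT μ G hG ^ n) g) := by
    intro n
    induction n with
    | zero => simpa using hd
    | succ n ih =>
      rw [pow_succ', pow_succ']
      exact dom_step μ hF hG h0 hFG ih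
  have h1 : ‖(kT μ F hF ^ n) f‖ ≤ ‖(kT μ G hG ^ n) g‖ :=
    Lp.norm_le_norm_of_ae_le ((hdn n).mono fun x hx => hx.2)
  have h2 : ‖g‖ ≤ ‖f‖ := Lp.norm_le_norm_of_ae_le (hgc.mono fun x hx => by rw [hx]; simp)
  exact h1.trans ((ContinuousLinearMap.le_opNorm _ _).trans (by gcongr))

lemma specRad_mono (μ : Measure Ω) [IsProbabilityMeasure μ] {Γ Γ' : Ω → Ω → ℝ}
    (h : BK (Function.uncurry Γ)) (h' : BK (Function.uncurry Γ')) (h0 : ∀ x y, 0 ≤ Γ x y)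
    (hle : ∀ x y, Γ x y ≤ Γ' x y) : specRad μ Γ ≤ specRad μ Γ' := by
  obtain ⟨a, _, b, _⟩ := specRad_facts μ h
  obtain ⟨a', _, b', _⟩ := specRad_facts μ h'
  rw [← ENNReal.ofReal_le_ofReal_iff b', a, a']
  refine le_of_tendsto_of_tendsto' (spectrum.pow_nnnorm_pow_one_div_tendsto_nhds_spectralRadius _)
    (spectrum.pow_nnnorm_pow_one_div_tendsto_nhds_spectralRadius _) fun n => ?_
  refine ENNReal.rpow_le_rpow ?_ (by positivity)
  exact_mod_cast norm_pow_mono μ h h' (fun p => h0 p.1 p.2) (fun p => hle p.1 p.2) n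

lemma specRad_usc (μ : Measure Ω) [IsProbabilityMeasure μ] {Γs : ℕ → Ω → Ω → ℝ} {Γ : Ω → Ω → ℝ}
    (hs : ∀ n, BK (Function.uncurry (Γs n))) (h : BK (Function.uncurry Γ)) (M : ℝ)
    (hM : ∀ n x y, ‖Γs n x y‖ ≤ M) (hlim : ∀ x y, Tendsto (fun n => Γs n x y) atTop (𝓝 (Γ x y)))
    {ρ : ℝ} (hρ : ∀ n, ρ ≤ specRad μ (Γs n)) : ρ ≤ specRad μ Γ := by
  obtain ⟨a, _, b, _⟩ := specRad_facts μ h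
  rw [← ENNReal.ofReal_le_ofReal_iff b, a]
  have hT := kT_tendsto μ hs h M (fun n p => hM n p.1 p.2) (fun p => hlim p.1 p.2)
  have hk : ∀ m : ℕ, ENNReal.ofReal ρ ≤
      (‖kT μ (Function.uncurry Γ) h ^ (m + 1)‖₊ : ℝ≥0∞) ^ (1 / ((m + 1 : ℕ) : ℝ)) := by
    intro m
    have h1 : Tendsto (fun n => (‖kT μ (Function.uncurry (Γs n)) (hs n) ^ (m + 1)‖₊ : ℝ≥0∞)
        ^ (1 / ((m + 1 : ℕ) : ℝ))) atTop
        (𝓝 ((‖kT μ (Function.uncurry Γ) h ^ (m + 1)‖₊ : ℝ≥0∞) ^ (1 / ((m + 1 : ℕ) : ℝ)))) :=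
      (ENNReal.continuous_rpow_const.tendsto _).comp
        (ENNReal.tendsto_coe.2 (hT.pow (m + 1)).nnnorm)
    refine ge_of_tendsto' h1 fun n => ?_
    have h2 := spectrum.spectralRadius_le_pow_nnnorm_pow_one_div ℂ
      (kT μ (Function.uncurry (Γs n)) (hs n)) m
    rw [nnnorm_one, ENNReal.coe_one, ENNReal.one_rpow, mul_one, ← (specRad_facts μ (hs n)).1] at h2
    refine (ENNReal.ofReal_le_ofReal (hρ n)).trans ?_
    rw [Nat.cast_add_one]
    exact h2
  refine ge_of_tendsto ((spectrum.pow_nnnorm_pow_one_div_tendsto_nhds_spectralRadius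
    (kT μ (Function.uncurry Γ) h)).comp (tendsto_add_atTop_nat 1)) (Eventually.of_forall hk)

/-! ### Restrictions and minimal sets -/

lemma kR_apply (Γ : Ω → Ω → ℝ) (A : Set Ω) (x y : Ω) [Decidable (x ∈ A ∧ y ∈ A)] :
    kerRestrict Γ A x y = if x ∈ A ∧ y ∈ A then Γ x y else 0 := by
  classical
  rw [kerRestrict, indicator_apply]
  congr

lemma kR_mem (Γ : Ω → Ω → ℝ) {A : Set Ω} {x y : Ω} (hx : x ∈ A) (hy : y ∈ A) :
    kerRestrict Γ A x y = Γ x y := by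
  classical
  simp [kR_apply, hx, hy]

lemma kR_left (Γ : Ω → Ω → ℝ) {A : Set Ω} {x y : Ω} (hx : x ∉ A) :
    kerRestrict Γ A x y = 0 := by
  classical
  simp [kR_apply, hx]

lemma kR_right (Γ : Ω → Ω → ℝ) {A : Set Ω} {x y : Ω} (hy : y ∉ A) :
    kerRestrict Γ A x y = 0 := by
  classical
  simp [kR_apply, hy]

lemma BK_dig {Γ : Ω → Ω → ℝ} (hΓ : IsDigraphon Γ) : BK (Function.uncurry Γ) :=
  ⟨hΓ.1, 1, fun p => by
    have := hΓ.2 p.1 p.2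
    rw [Real.norm_eq_abs, abs_le]
    exact ⟨by have := this.1; simp only [Function.uncurry]; linarith, this.2⟩⟩

lemma dig_kR {Γ : Ω → Ω → ℝ} (hΓ : IsDigraphon Γ) {A : Set Ω} (hA : MeasurableSet A) :
    IsDigraphon (kerRestrict Γ A) := by
  classical
  refine ⟨hΓ.1.indicator (hA.prod hA), fun x y => ?_⟩
  rw [kR_apply]
  split_ifs
  · exact hΓ.2 x y
  · simp

lemma specRad_kR_mono (μ : Measure Ω) [IsProbabilityMeasure μ] {Γ : Ω → Ω → ℝ}
    (hΓ : IsDigraphon Γ) {A B : Set Ω} (hA : MeasurableSet A) (hB : MeasurableSet B)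
    (hAB : A ⊆ B) : specRad μ (kerRestrict Γ A) ≤ specRad μ (kerRestrict Γ B) := by
  classical
  refine specRad_mono μ (BK_dig (dig_kR hΓ hA)) (BK_dig (dig_kR hΓ hB))
    (fun x y => ((dig_kR hΓ hA).2 x y).1) fun x y => ?_
  by_cases h : x ∈ A ∧ y ∈ A
  · rw [kR_mem Γ h.1 h.2, kR_mem Γ (hAB h.1) (hAB h.2)]
  · rw [kR_apply, if_neg h]
    exact ((dig_kR hΓ hB).2 x y).1

lemma kR_univ (Γ : Ω → Ω → ℝ) : kerRestrict Γ univ = Γ := by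
  funext x y
  exact kR_mem Γ (mem_univ x) (mem_univ y)

/-- Removing a null set does not decrease the spectral radius. -/
lemma specRad_kR_null (μ : Measure Ω) [IsProbabilityMeasure μ] {Γ : Ω → Ω → ℝ}
    {A B : Set Ω} (hAB : B ⊆ A) (h0 : μ (A \ B) = 0) :
    specRad μ (kerRestrict Γ B) = specRad μ (kerRestrict Γ A) := by
  have hae : ∀ᵐ x ∂μ, x ∉ A \ B := measure_eq_zero_iff_ae_notMem.1 h0
  have key : ∀ᵐ x ∂μ, ∀ᵐ y ∂μ, kerRestrict Γ A y x = kerRestrict Γ B y x := by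
    filter_upwards [hae] with x hx
    filter_upwards [hae] with y hy
    classical
    have e1 : x ∈ A ↔ x ∈ B := ⟨fun h => by_contra fun h' => hx ⟨h, h'⟩, fun h => hAB h⟩
    have e2 : y ∈ A ↔ y ∈ B := ⟨fun h => by_contra fun h' => hy ⟨h, h'⟩, fun h => hAB h⟩
    simp [kR_apply, e1, e2]
  have : ∀ τ, IsEigenvalue μ (kerRestrict Γ B) τ ↔ IsEigenvalue μ (kerRestrict Γ A) τ := by
    intro τ
    refine exists_congr fun f => and_congr_right fun _ => and_congr_right fun _ => ?_
    refine eventually_congr ?_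
    filter_upwards [key] with x hx
    have : ∫ y, f y * (kerRestrict Γ B y x : ℂ) ∂μ = ∫ y, f y * (kerRestrict Γ A y x : ℂ) ∂μ := by
      refine integral_congr_ae ?_
      filter_upwards [hx] with y hy
      rw [hy]
    rw [this]
  simp only [specRad, this]

/-- Closure under decreasing intersections. -/
lemma specRad_iInter (μ : Measure Ω) [IsProbabilityMeasure μ] {Γ : Ω → Ω → ℝ}
    (hΓ : IsDigraphon Γ) {C : ℕ → Set Ω} (hC : ∀ n, MeasurableSet (C n)) (ha : Antitone C)
    {ρ : ℝ} (hρ : ∀ n, ρ ≤ specRad μ (kerRestrict Γ (C n))) :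
    ρ ≤ specRad μ (kerRestrict Γ (⋂ n, C n)) := by
  have hm : MeasurableSet (⋂ n, C n) := MeasurableSet.iInter hC
  refine specRad_usc μ (fun n => BK_dig (dig_kR hΓ (hC n))) (BK_dig (dig_kR hΓ hm)) 1
    (fun n x y => ?_) (fun x y => ?_) hρ
  · have := (dig_kR hΓ (hC n)).2 x y
    rw [Real.norm_of_nonneg this.1]
    exact this.2
  · by_cases hx : x ∈ ⋂ n, C n
    · by_cases hy : y ∈ ⋂ n, C n
      · rw [kR_mem Γ hx hy]
        exact tendsto_const_nhds.congr fun n =>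
          (kR_mem Γ (mem_iInter.1 hx n) (mem_iInter.1 hy n)).symm
      · rw [kR_right Γ hy]
        obtain ⟨i, hi⟩ := not_forall.1 (fun h => hy (mem_iInter.2 h))
        refine tendsto_const_nhds.congr' ?_
        filter_upwards [eventually_ge_atTop i] with n hn
        exact (kR_right Γ fun h => hi (ha hn h)).symm
    · rw [kR_left Γ hx]
      obtain ⟨i, hi⟩ := not_forall.1 (fun h => hx (mem_iInter.2 h))
      refine tendsto_const_nhds.congr' ?_
      filter_upwards [eventually_ge_atTop i] with n hn
      exact (kR_left Γ fun h => hi (ha hn h)).symm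

/-- Minimal sets for a family closed under decreasing intersections. -/
lemma exists_minimal_set (μ : Measure Ω) [IsProbabilityMeasure μ] (P : Set Ω → Prop)
    (hP : ∀ A, P A → MeasurableSet A) (h0 : P univ)
    (hI : ∀ C : ℕ → Set Ω, (∀ n, P (C n)) → Antitone C → P (⋂ n, C n)) :
    ∃ C, P C ∧ ∀ D, P D → D ⊆ C → μ C ≤ μ D := by
  have step : ∀ (A : {A // P A}) (n : ℕ), ∃ B : {B // P B}, B.1 ⊆ A.1 ∧
      ∀ D, P D → D ⊆ A.1 → μ B.1 ≤ μ D + (n + 1 : ℝ≥0∞)⁻¹ := by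
    intro A n
    set m : ℝ≥0∞ := ⨅ D : {D // P D ∧ D ⊆ A.1}, μ D.1 with hm
    have hmt : m ≠ ∞ :=
      ne_top_of_le_ne_top (measure_ne_top μ A.1) (iInf_le (fun D : {D // P D ∧ D ⊆ A.1} => μ D.1) ⟨A.1, A.2, Subset.rfl⟩)
    have hlt : m < m + (n + 1 : ℝ≥0∞)⁻¹ := ENNReal.lt_add_right hmt (by simp)
    obtain ⟨⟨B, hB, hBA⟩, hlt⟩ := iInf_lt_iff.1 hlt
    refine ⟨⟨B, hB⟩, hBA, fun D hD hDA => hlt.le.trans ?_⟩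
    gcongr
    exact iInf_le (fun D : {D // P D ∧ D ⊆ A.1} => μ D.1) ⟨D, hD, hDA⟩
  choose nx hnx1 hnx2 using step
  let C : ℕ → {A // P A} := fun n => Nat.rec ⟨univ, h0⟩ (fun n A => nx A n) n
  have hC : ∀ n, C (n + 1) = nx (C n) n := fun n => rfl
  have ha : Antitone (fun n => (C n).1) := antitone_nat_of_succ_le fun n => by
    rw [hC]; exact hnx1 _ _
  refine ⟨⋂ n, (C n).1, hI _ (fun n => (C n).2) ha, fun D hD hDC => ?_⟩
  have hb : ∀ n : ℕ, μ (⋂ n, (C n).1) ≤ μ D + (n + 1 : ℝ≥0∞)⁻¹ := fun n =>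
    (measure_mono (iInter_subset _ (n + 1))).trans
      (by rw [hC]; exact hnx2 (C n) n D hD (hDC.trans (iInter_subset _ n)))
  have hl : Tendsto (fun n : ℕ => μ D + (n + 1 : ℝ≥0∞)⁻¹) atTop (𝓝 (μ D + 0)) := by
    refine tendsto_const_nhds.add ?_
    have := ENNReal.tendsto_inv_nat_nhds_zero.comp (tendsto_add_atTop_nat 1)
    simpa [Function.comp_def] using this
  rw [add_zero] at hl
  exact ge_of_tendsto' hl hb

/-- A minimal set is strongly connected. -/
lemma sc_of_minimal (μ : Measure Ω) [IsProbabilityMeasure μ] {Γ : Ω → Ω → ℝ}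
    (hΓ : IsDigraphon Γ) {C : Set Ω} (hC : MeasurableSet C) {ρ : ℝ} (hρ : 0 < ρ)
    (hCρ : ρ ≤ specRad μ (kerRestrict Γ C))
    (hmin : ∀ D, MeasurableSet D → ρ ≤ specRad μ (kerRestrict Γ D) → D ⊆ C → μ C ≤ μ D) :
    StronglyConnectedIn μ Γ C := by
  obtain ⟨_, _, _, hex⟩ := specRad_facts μ (BK_dig (dig_kR hΓ hC))
  obtain ⟨τ, ⟨f, hf, hf0, he⟩, hτ⟩ := hex (hρ.trans_le hCρ)
  have hτ0 : τ ≠ 0 := norm_pos_iff.1 (hτ ▸ hρ.trans_le hCρ)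
  have hfC : ∀ᵐ x ∂μ, x ∉ C → f x = 0 := by
    filter_upwards [he] with x hx hxC
    have h1 : ∫ y, f y * (kerRestrict Γ C y x : ℂ) ∂μ = 0 := by
      simp [kR_right Γ hxC]
    rw [h1] at hx
    exact (mul_eq_zero.1 hx.symm).resolve_left hτ0
  refine ⟨hC, ?_, ?_⟩
  · rw [pos_iff_ne_zero]
    intro h
    refine hf0 ?_
    filter_upwards [hfC, measure_eq_zero_iff_ae_notMem.1 h] with x hx hx2
    exact hx hx2
  · intro A B hA hB hAB hd hA0 hB0
    by_contra hcon
    have hAC : A ⊆ C := hAB ▸ subset_union_left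
    have hBC : B ⊆ C := hAB ▸ subset_union_right
    have hsum : μ C = μ A + μ B := by rw [← hAB, measure_union hd hB]
    have hinner : ∀ x, 0 ≤ ∫ y in B, Γ x y ∂μ := fun x => integral_nonneg fun y => (hΓ.2 x y).1
    have hΓi : ∀ x, Integrable (fun y => Γ x y) (μ.restrict B) := fun x =>
      Integrable.of_bound (C := 1) (hΓ.1.comp (measurable_const.prodMk measurable_id)).aestronglyMeasurable
        (Eventually.of_forall fun y => by
          rw [Real.norm_of_nonneg (hΓ.2 x y).1]; exact (hΓ.2 x y).2)
    have hmi : AEStronglyMeasurable (fun x => ∫ y in B, Γ x y ∂μ) (μ.restrict A) :=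
      (hΓ.1.stronglyMeasurable.integral_prod_right (ν := μ.restrict B)).aestronglyMeasurable
    have hii : Integrable (fun x => ∫ y in B, Γ x y ∂μ) (μ.restrict A) := by
      refine Integrable.of_bound (C := 1) hmi (Eventually.of_forall fun x => ?_)
      rw [Real.norm_of_nonneg (hinner x)]
      refine (integral_mono (hΓi x) (integrable_const (1:ℝ)) fun y => (hΓ.2 x y).2).trans ?_
      simp only [integral_const, smul_eq_mul, mul_one]
      simpa using (measureReal_le_one (μ := μ) (s := B))
    have hz : ∫ x in A, ∫ y in B, Γ x y ∂μ ∂μ = 0 :=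
      le_antisymm (not_lt.1 hcon) (integral_nonneg hinner)
    rw [integral_eq_zero_iff_of_nonneg hinner hii] at hz
    have hz2 : ∀ᵐ x ∂(μ.restrict A), ∀ᵐ y ∂(μ.restrict B), Γ x y = 0 := by
      filter_upwards [hz] with x hx
      exact (integral_eq_zero_iff_of_nonneg (fun y => (hΓ.2 x y).1) (hΓi x)).1 hx
    rw [Measure.ae_ae_comm (p := fun x y => Γ x y = 0)
      (measurableSet_eq_fun hΓ.1 measurable_const), ae_restrict_iff' hB] at hz2
    by_cases hfB : ∀ᵐ x ∂μ, x ∈ B → f x = 0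
    · have hEA : IsEigenvalue μ (kerRestrict Γ A) τ := by
        refine ⟨f, hf, hf0, ?_⟩
        have hfA : ∀ᵐ x ∂μ, x ∉ A → f x = 0 := by
          filter_upwards [hfC, hfB] with x h1 h2 h3
          by_cases hx : x ∈ C
          · rw [← hAB] at hx
            exact h2 (hx.resolve_left h3)
          · exact h1 hx
        filter_upwards [he, hfA] with x hx hxA
        by_cases h : x ∈ A
        · rw [← hx]
          refine integral_congr_ae ?_
          filter_upwards [hfA] with y hy
          by_cases hyA : y ∈ A
          · rw [kR_mem Γ hyA h, kR_mem Γ (hAC hyA) (hAC h)]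
          · simp [hy hyA]
        · simp [kR_right Γ h, hxA h]
      have := (specRad_facts μ (BK_dig (dig_kR hΓ hA))).2.1 τ hEA
      have h1 := hmin A hA (hCρ.trans (hτ ▸ this)) hAC
      rw [hsum] at h1
      exact absurd h1 (not_le.2 (ENNReal.lt_add_right (measure_ne_top μ A) hB0.ne'))
    · have hEB : IsEigenvalue μ (kerRestrict Γ B) τ := by
        refine ⟨B.indicator f, hf.indicator hB, ?_, ?_⟩
        · intro h
          refine hfB ?_
          filter_upwards [h] with x hx hxB
          rwa [indicator_of_mem hxB] at hx
        filter_upwards [he, hz2] with x hx hxz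
        by_cases h : x ∈ B
        · rw [indicator_of_mem h, ← hx]
          refine integral_congr_ae ?_
          filter_upwards [(ae_restrict_iff' hA).1 (hxz h)] with y hy
          by_cases hyB : y ∈ B
          · rw [kR_mem Γ hyB h, kR_mem Γ (hBC hyB) (hBC h), indicator_of_mem hyB]
          · rw [indicator_of_notMem hyB, zero_mul]
            by_cases hyA : y ∈ A
            · rw [kR_mem Γ (hAC hyA) (hBC h), hy hyA]
              simp
            · rw [kR_left Γ (fun hh => by rw [← hAB] at hh; exact hh.elim hyA hyB)]
              simp
        · simp [kR_right Γ h, h]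
      have := (specRad_facts μ (BK_dig (dig_kR hΓ hB))).2.1 τ hEB
      have h1 := hmin B hB (hCρ.trans (hτ ▸ this)) hBC
      rw [hsum, add_comm] at h1
      exact absurd h1 (not_le.2 (ENNReal.lt_add_right (measure_ne_top μ B) hA0.ne'))

/-- The spectral radius of a digraphon equals the supremum of the spectral
radii of its strong components, and the supremum is attained when there is at least one
strong component. -/
theorem specRad_eq_iSup_strong_components
    {Ω : Type*} [MeasurableSpace Ω] (μ : Measure Ω) [IsProbabilityMeasure μ]
    (Γ : Ω → Ω → ℝ) (hΓ : IsDigraphon Γ)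
    (I : Set ℕ) (hI : 0 ∉ I) (X : ℕ → Set Ω)
    (hXmeas : ∀ i ∈ insert 0 I, MeasurableSet (X i))
    (hXdisj : (insert 0 I).PairwiseDisjoint X)
    (hXcover : (⋃ i ∈ insert 0 I, X i) = Set.univ)
    (hX0 : μ (X 0) = 0 ∨ Fragmented μ Γ (X 0))
    (hXcomp : ∀ i ∈ I, StrongComponent μ Γ (X i)) :
    specRad μ Γ = (⨆ i : I, specRad μ (kerRestrict Γ (X i))) ∧
      (I.Nonempty → ∃ i ∈ I, specRad μ (kerRestrict Γ (X i)) = specRad μ Γ) := by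
  have hge : ∀ i ∈ I, specRad μ (kerRestrict Γ (X i)) ≤ specRad μ Γ := by
    intro i hi
    have := specRad_kR_mono μ hΓ (hXmeas i (mem_insert_of_mem 0 hi)) MeasurableSet.univ
      (subset_univ (X i))
    rwa [kR_univ] at this
  have hnn : ∀ i ∈ I, 0 ≤ specRad μ (kerRestrict Γ (X i)) := fun i hi =>
    (specRad_facts μ (BK_dig (dig_kR hΓ (hXmeas i (mem_insert_of_mem 0 hi))))).2.2.1
  have hnn0 : 0 ≤ specRad μ Γ := (specRad_facts μ (BK_dig hΓ)).2.2.1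
  have hpos : 0 < specRad μ Γ → ∃ i ∈ I, specRad μ (kerRestrict Γ (X i)) = specRad μ Γ := by
    intro hρ
    set ρ := specRad μ Γ with hρdef
    obtain ⟨C, ⟨hCm, hCρ⟩, hmin⟩ := exists_minimal_set μ
      (fun A => MeasurableSet A ∧ ρ ≤ specRad μ (kerRestrict Γ A)) (fun A h => h.1)
      ⟨MeasurableSet.univ, by rw [kR_univ]⟩
      (fun C hC ha => ⟨MeasurableSet.iInter fun n => (hC n).1,
        specRad_iInter μ hΓ (fun n => (hC n).1) ha fun n => (hC n).2⟩)
    have hsc := sc_of_minimal μ hΓ hCm hρ hCρ fun D hD hDρ hDC => hmin D ⟨hD, hDρ⟩ hDC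
    by_cases hi : ∃ i ∈ I, 0 < μ (X i ∩ C)
    · obtain ⟨i, hi, hiC⟩ := hi
      refine ⟨i, hi, le_antisymm (hge i hi) ?_⟩
      have hXi := hXmeas i (mem_insert_of_mem 0 hi)
      have h0 : μ (C \ X i) = 0 := by
        by_contra hne
        exact (hXcomp i hi).2 C hCm hiC (pos_iff_ne_zero.2 hne) hsc
      have h1 : specRad μ (kerRestrict Γ (C ∩ X i)) = specRad μ (kerRestrict Γ C) :=
        specRad_kR_null μ inter_subset_left (by rwa [sdiff_self_inter])
      exact (hCρ.trans h1.ge).trans (specRad_kR_mono μ hΓ (hCm.inter hXi) hXi inter_subset_right)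
    · exfalso
      push Not at hi
      have h0m := hXmeas 0 (mem_insert 0 I)
      have h0 : μ (C \ X 0) = 0 := by
        refine measure_mono_null (t := ⋃ i ∈ I, X i ∩ C) ?_
          ((measure_biUnion_null_iff I.to_countable).2 fun i hiI => le_zero_iff.1 (hi i hiI))
        rintro x ⟨hxC, hx0⟩
        have hx : x ∈ ⋃ i ∈ insert 0 I, X i := hXcover ▸ mem_univ x
        simp only [mem_iUnion, mem_insert_iff] at hx ⊢
        obtain ⟨i, rfl | hiI, hxi⟩ := hx
        · exact absurd hxi hx0
        · exact ⟨i, hiI, hxi, hxC⟩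
      rcases hX0 with hX0 | hX0
      · have : μ C ≤ 0 := by
          calc μ C ≤ μ (C \ X 0 ∪ X 0) := measure_mono (by
                intro x hx
                by_cases h : x ∈ X 0
                · exact Or.inr h
                · exact Or.inl ⟨hx, h⟩)
            _ ≤ μ (C \ X 0) + μ (X 0) := measure_union_le _ _
            _ = 0 := by rw [h0, hX0, add_zero]
        exact absurd hsc.2.1 (not_lt.2 this)
      · have h1 : specRad μ (kerRestrict Γ (C ∩ X 0)) = specRad μ (kerRestrict Γ C) :=
          specRad_kR_null μ inter_subset_left (by rwa [sdiff_self_inter])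
        refine hX0 (C ∩ X 0) inter_subset_right (hCm.inter h0m)
          (sc_of_minimal μ hΓ (hCm.inter h0m) hρ (hCρ.trans h1.ge) fun D hD hDρ hDC => ?_)
        exact (measure_mono inter_subset_left).trans
          (hmin D ⟨hD, hDρ⟩ (hDC.trans inter_subset_left))
  have hatt : I.Nonempty → ∃ i ∈ I, specRad μ (kerRestrict Γ (X i)) = specRad μ Γ := by
    rintro ⟨i, hi⟩
    rcases hnn0.eq_or_lt with h | h
    · exact ⟨i, hi, le_antisymm (hge i hi) (h ▸ hnn i hi)⟩
    · exact hpos h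
  refine ⟨?_, hatt⟩
  rcases I.eq_empty_or_nonempty with hE | hne
  · have : IsEmpty I := by rw [hE]; infer_instance
    rw [Real.iSup_of_isEmpty]
    rcases hnn0.eq_or_lt with h | h
    · exact h.symm
    · obtain ⟨i, hi, _⟩ := hpos h
      rw [hE] at hi
      exact absurd hi (notMem_empty i)
  · obtain ⟨i, hi, hieq⟩ := hatt hne
    have : Nonempty I := ⟨⟨i, hi⟩⟩
    refine le_antisymm ?_ (ciSup_le fun j => hge j.1 j.2)
    rw [← hieq]
    exact le_ciSup (f := fun i : I => specRad μ (kerRestrict Γ (X i)))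
      ⟨specRad μ Γ, by rintro _ ⟨j, rfl⟩; exact hge j.1 j.2⟩ ⟨i, hi⟩

end Digraphon
end
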